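/- arXiv:2309.11078 — 2 statements merged into one kernel-verified Lean document; each statement's English description precedes it below -/
import Mathlib

section
/- Let S be a semigroup with functions e, s : S → S satisfying (A1), (A2) and (A3) (an assembly). Then the idempotents of S commute pairwise (f·g = g·f for all f, g ∈ E(S)) if and only if every idempotent of S is central (f·x = x·f for all f ∈ E(S) and all x ∈ S). -/
/-- Condition (A1): for all x, x·e(x) = e(x)·x = x, and every f with
x·f = f·x = x satisfies e(x)·f = f·e(x) = e(x). -/
def CondA1 {S : Type*} [Semigroup S] (e : S → S) : Prop :=
  ∀ x : S, (x * e x = x ∧ e x * x = x) ∧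
    ∀ f : S, x * f = x → f * x = x → e x * f = e x ∧ f * e x = e x

/-- Condition (A2): for all x, x·s(x) = s(x)·x = e(x) and e(s(x)) = e(x). -/
def CondA2 {S : Type*} [Semigroup S] (e s : S → S) : Prop :=
  ∀ x : S, x * s x = e x ∧ s x * x = e x ∧ e (s x) = e x

/-- Condition (A3): e is multiplicative. -/
def CondA3 {S : Type*} [Semigroup S] (e : S → S) : Prop :=
  ∀ x y : S, e (x * y) = e x * e y

/-!
An idempotent `f` is its own local identity, `e f = f`, so if it commutes with the idempotent `e x`
then `e (f * x) = f * e x = e x * f`. Since `f * x` absorbs `e (f * x)` and `x` absorbs `e x`, this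
gives `f * x = f * x * f`; dually `x * f = f * x * f`.
-/

namespace CondA1

variable {S : Type*} [Semigroup S] {e : S → S} {f x : S}

theorem mul_apply_self (h1 : CondA1 e) (x : S) : x * e x = x :=
  (h1 x).1.1

theorem apply_self_mul (h1 : CondA1 e) (x : S) : e x * x = x :=
  (h1 x).1.2

theorem isIdempotentElem_apply (h1 : CondA1 e) (x : S) : IsIdempotentElem (e x) :=
  ((h1 x).2 (e x) (h1.mul_apply_self x) (h1.apply_self_mul x)).1

theorem apply_eq_self_of_isIdempotentElem (h1 : CondA1 e) (hf : IsIdempotentElem f) : e f = f :=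
  calc
    e f = e f * f := ((h1 f).2 f hf hf).1.symm
    _ = f := h1.apply_self_mul f

theorem mul_mul_eq_mul_left (h1 : CondA1 e) (h3 : CondA3 e) (hf : IsIdempotentElem f)
    (hfx : Commute f (e x)) : f * x * f = f * x := by
  have apply_mul : e (f * x) = e x * f := by
    rw [h3, h1.apply_eq_self_of_isIdempotentElem hf, hfx.eq]
  calc
    f * x * f = f * (x * e x) * f := by rw [h1.mul_apply_self]
    _ = f * x * e (f * x) := by simp only [apply_mul, mul_assoc]
    _ = f * x := h1.mul_apply_self (f * x)

theorem mul_mul_eq_mul_right (h1 : CondA1 e) (h3 : CondA3 e) (hf : IsIdempotentElem f)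
    (hfx : Commute f (e x)) : f * x * f = x * f := by
  have apply_mul : e (x * f) = f * e x := by
    rw [h3, h1.apply_eq_self_of_isIdempotentElem hf, hfx.eq]
  calc
    f * x * f = f * (e x * x) * f := by rw [h1.apply_self_mul]
    _ = e (x * f) * (x * f) := by simp only [apply_mul, mul_assoc]
    _ = x * f := h1.apply_self_mul (x * f)

theorem commute_of_commute_apply (h1 : CondA1 e) (h3 : CondA3 e) (hf : IsIdempotentElem f)
    (hfx : Commute f (e x)) : Commute f x :=
  (h1.mul_mul_eq_mul_left h3 hf hfx).symm.trans (h1.mul_mul_eq_mul_right h3 hf hfx)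

end CondA1

theorem stmt_9_general {S : Type*} [Semigroup S] (e : S → S) (h1 : CondA1 e) (h3 : CondA3 e) :
    (∀ f g : S, f * f = f → g * g = g → f * g = g * f) ↔
    (∀ f : S, f * f = f → ∀ x : S, f * x = x * f) := by
  constructor
  · intro idempotents_commute f hf x
    have hfx : Commute f (e x) := idempotents_commute f (e x) hf (h1.isIdempotentElem_apply x)
    exact h1.commute_of_commute_apply h3 hf hfx
  · intro idempotents_central f g hf _
    exact idempotents_central f hf g

/-- in an assembly, the idempotents commute pairwise iff every
idempotent is central. -/
theorem stmt_9 {S : Type*} [Semigroup S] (e s : S → S)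
    (h1 : CondA1 e) (h2 : CondA2 e s) (h3 : CondA3 e) :
    (∀ f g : S, f * f = f → g * g = g → f * g = g * f) ↔
    (∀ f : S, f * f = f → ∀ x : S, f * x = x * f) :=
  stmt_9_general e h1 h3
end

section
/- Let A and B be semigroups with functions e_A, s_A : A → A and e_B, s_B : B → B satisfying (A1), (A2) and (A3) (assemblies), and let φ : A → B be a semigroup homomorphism, i.e., φ(x·y) = φ(x)·φ(y) for all x, y ∈ A. Then for every x ∈ A: φ(e_A(x)) = e_B(φ(x)) and φ(s_A(x)) = s_B(φ(x)). -/
/-!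
Conditions (A1) and (A2) make `s x` a group inverse of `x`. A group inverse is unique and is
preserved by every homomorphism, so `φ (s x) = s (φ x)`, and multiplying by `φ x` gives
`φ (e x) = e (φ x)`.
-/

/-- `y` is a group inverse of `x`: a commuting generalized inverse, that is, an inverse of `x` in a
subgroup of the ambient semigroup. The identity of that subgroup is `x * y`, so it is not a
separate parameter. -/
structure IsGroupInverse {M : Type*} [Mul M] (x y : M) : Prop where
  mul_mul_left : x * y * x = x
  mul_mul_right : y * x * y = y
  commute : Commute x y

namespace IsGroupInverse

theorem map {M N F : Type*} [Mul M] [Mul N] [FunLike F M N] [MulHomClass F M N] {x y : M}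
    (h : IsGroupInverse x y) (φ : F) : IsGroupInverse (φ x) (φ y) where
  mul_mul_left := by rw [← map_mul, ← map_mul, h.mul_mul_left]
  mul_mul_right := by rw [← map_mul, ← map_mul, h.mul_mul_right]
  commute := h.commute.map φ

variable {S : Type*} [Semigroup S] {x y z : S}

theorem mul_eq_mul (hy : IsGroupInverse x y) (hz : IsGroupInverse x z) : x * y = x * z :=
  calc
    x * y = y * x := hy.commute
    _ = y * (x * z * x) := by rw [hz.mul_mul_left]
    _ = y * x * (z * x) := by simp only [mul_assoc]
    _ = x * y * (x * z) := by rw [hy.commute.eq, hz.commute.eq]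
    _ = x * y * x * z := (mul_assoc _ _ _).symm
    _ = x * z := by rw [hy.mul_mul_left]

theorem unique (hy : IsGroupInverse x y) (hz : IsGroupInverse x z) : y = z :=
  calc
    y = y * x * y := hy.mul_mul_right.symm
    _ = y * (x * z) := by rw [mul_assoc, hy.mul_eq_mul hz]
    _ = x * y * z := by rw [← mul_assoc, hy.commute.eq]
    _ = z * x * z := by rw [hy.mul_eq_mul hz, hz.commute.eq]
    _ = z := hz.mul_mul_right

end IsGroupInverse

theorem CondA2.isGroupInverse {S : Type*} [Semigroup S] {e s : S → S} (h2 : CondA2 e s)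
    (h1 : CondA1 e) (x : S) : IsGroupInverse x (s x) := by
  obtain ⟨hxs, hsx, hes⟩ := h2 x
  have e_mul_x : e x * x = x := (h1 x).1.2
  have e_mul_s : e x * s x = s x := hes ▸ (h1 (s x)).1.2
  exact
    { mul_mul_left := by rw [hxs, e_mul_x]
      mul_mul_right := by rw [hsx, e_mul_s]
      commute := hxs.trans hsx.symm }

theorem stmt_15_general {A B : Type*} [Semigroup A] [Semigroup B] {eA sA : A → A} {eB sB : B → B}
    (hA1 : CondA1 eA) (hA2 : CondA2 eA sA) (hB1 : CondA1 eB) (hB2 : CondA2 eB sB)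
    (φ : A →ₙ* B) (x : A) : φ (eA x) = eB (φ x) ∧ φ (sA x) = sB (φ x) := by
  have map_s : φ (sA x) = sB (φ x) :=
    ((hA2.isGroupInverse hA1 x).map φ).unique (hB2.isGroupInverse hB1 (φ x))
  refine ⟨?_, map_s⟩
  calc
    φ (eA x) = φ (x * sA x) := by rw [(hA2 x).1]
    _ = φ x * sB (φ x) := by rw [map_mul, map_s]
    _ = eB (φ x) := (hB2 (φ x)).1

/-- a semigroup homomorphism between assemblies respects e and s. -/
theorem stmt_15 {A B : Type*} [Semigroup A] [Semigroup B]
    (eA sA : A → A) (eB sB : B → B)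
    (hA1 : CondA1 eA) (hA2 : CondA2 eA sA) (hA3 : CondA3 eA)
    (hB1 : CondA1 eB) (hB2 : CondA2 eB sB) (hB3 : CondA3 eB)
    (φ : A → B) (hφ : ∀ x y : A, φ (x * y) = φ x * φ y) :
    ∀ x : A, φ (eA x) = eB (φ x) ∧ φ (sA x) = sB (φ x) :=
  stmt_15_general hA1 hA2 hB1 hB2 ⟨φ, hφ⟩
end
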